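/- arXiv:q-alg/9511001 — 2 statements merged into one kernel-verified Lean document; each statement's English description precedes it below -/
import Mathlib

section
/- Let H be a quasitriangular Hopf algebra over a field k and let D be a braided group in the braided category of left H-modules, with invertible braided antipode S̲. Then D^{cop̲} — the same algebra, unit and counit as D, equipped with the opposite braided coproduct Ψ_{D,D}^{-1}∘Δ̲ and antipode S̲^{-1} — is a braided group in the braided category of left modules over H̄, where H̄ denotes the Hopf algebra H equipped with the quasitriangular structure 𝓑̄ = 𝓑₂₁⁻¹. -/
open TensorProduct LinearMap

namespace DBos

variable (k : Type) [Field k]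
variable (H : Type) [Ring H] [HopfAlgebra k H]

/-- The four-fold transposition `(V⊗W)⊗(X⊗Y) → (V⊗X)⊗(W⊗Y)`. -/
noncomputable def tttc (V W X Y : Type) [AddCommGroup V] [Module k V] [AddCommGroup W]
    [Module k W] [AddCommGroup X] [Module k X] [AddCommGroup Y] [Module k Y] :
    (V ⊗[k] W) ⊗[k] (X ⊗[k] Y) →ₗ[k] (V ⊗[k] X) ⊗[k] (W ⊗[k] Y) :=
  (TensorProduct.tensorTensorTensorComm k V W X Y).toLinearMap

/-- A quasitriangular structure on a Hopf algebra `H`: an invertible element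
`𝓡 ∈ H ⊗ H` satisfying the Drinfeld axioms `(Δ⊗id)𝓡 = 𝓡₁₃𝓡₂₃`,
`(id⊗Δ)𝓡 = 𝓡₁₃𝓡₁₂` and `τ∘Δ = 𝓡(Δ·)𝓡⁻¹`. -/
structure IsQT (R Rinv : H ⊗[k] H) : Prop where
  mul_inv : R * Rinv = 1
  inv_mul : Rinv * R = 1
  comul_fst :
    TensorProduct.map (Coalgebra.comul (R := k)) LinearMap.id R =
      (LinearMap.rTensor H (Algebra.TensorProduct.includeLeft
          (R := k) (S := k) (A := H) (B := H)).toLinearMap) R *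
      (LinearMap.rTensor H (Algebra.TensorProduct.includeRight
          (R := k) (A := H) (B := H)).toLinearMap) R
  comul_snd :
    TensorProduct.map LinearMap.id (Coalgebra.comul (R := k)) R =
      (LinearMap.lTensor H (Algebra.TensorProduct.includeRight
          (R := k) (A := H) (B := H)).toLinearMap) R *
      (LinearMap.lTensor H (Algebra.TensorProduct.includeLeft
          (R := k) (S := k) (A := H) (B := H)).toLinearMap) R
  quasi_comm : ∀ h : H,
    (TensorProduct.comm k H H) (Coalgebra.comul (R := k) h) * R =
      R * Coalgebra.comul (R := k) h

/-- A right `H`-module algebra, written with a curried right action. -/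
structure IsModAlgR (B : Type) [Ring B] [Algebra k B]
    (act : B →ₗ[k] H →ₗ[k] B) : Prop where
  act_one : ∀ b, act b 1 = b
  act_act : ∀ b h g, act (act b h) g = act b (h * g)
  one_act : ∀ h, act 1 h = Coalgebra.counit (R := k) h • (1 : B)
  mul_act : ∀ (h : H) (ι : Type) [Fintype ι] (h1 h2 : ι → H),
    Coalgebra.comul (R := k) h = ∑ i, h1 i ⊗ₜ[k] h2 i →
    ∀ b b' : B, act (b * b') h = ∑ i, act b (h1 i) * act b' (h2 i)

/-- A left `H`-module algebra, written with a curried left action. -/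
structure IsModAlgL (C : Type) [Ring C] [Algebra k C]
    (act : H →ₗ[k] C →ₗ[k] C) : Prop where
  one_act : ∀ c, act 1 c = c
  act_act : ∀ h g c, act h (act g c) = act (h * g) c
  act_one : ∀ h, act h (1 : C) = Coalgebra.counit (R := k) h • (1 : C)
  act_mul : ∀ (h : H) (ι : Type) [Fintype ι] (h1 h2 : ι → H),
    Coalgebra.comul (R := k) h = ∑ i, h1 i ⊗ₜ[k] h2 i →
    ∀ c c' : C, act h (c * c') = ∑ i, act (h1 i) c * act (h2 i) c'

/-- A braided group (Hopf algebra in the braided category) of right `H`-modules,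
with braiding `Ψ(v ⊗ w) = (w ◁ 𝓡⁽¹⁾) ⊗ (v ◁ 𝓡⁽²⁾)` determined by the
quasitriangular element `R`.  All comultiplication identities are stated in
Sweedler form: they are quantified over arbitrary finite representations of the
relevant coproducts as sums of pure tensors. -/
structure IsBraidedGroupR (R : H ⊗[k] H) (B : Type) [Ring B] [Algebra k B]
    (act : B →ₗ[k] H →ₗ[k] B) (cm : B →ₗ[k] B ⊗[k] B)
    (cu : B →ₗ[k] k) (S : B →ₗ[k] B) : Prop where
  modAlg : IsModAlgR k H B act
  coassoc : (TensorProduct.assoc k B B B).toLinearMap ∘ₗ LinearMap.rTensor B cm ∘ₗ cm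
      = LinearMap.lTensor B cm ∘ₗ cm
  counit_left : (TensorProduct.lid k B).toLinearMap ∘ₗ LinearMap.rTensor B cu ∘ₗ cm
      = LinearMap.id
  counit_right : (TensorProduct.rid k B).toLinearMap ∘ₗ LinearMap.lTensor B cu ∘ₗ cm
      = LinearMap.id
  cu_one : cu 1 = 1
  cu_mul : ∀ b b', cu (b * b') = cu b * cu b'
  cu_act : ∀ b h, cu (act b h) = cu b * Coalgebra.counit (R := k) h
  cm_one : cm 1 = 1 ⊗ₜ[k] 1
  cm_act : ∀ (b : B) (h : H) (ι : Type) [Fintype ι] (b1 b2 : ι → B)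
      (κ : Type) [Fintype κ] (h1 h2 : κ → H),
      cm b = ∑ i, b1 i ⊗ₜ[k] b2 i →
      Coalgebra.comul (R := k) h = ∑ j, h1 j ⊗ₜ[k] h2 j →
      cm (act b h) = ∑ i, ∑ j, act (b1 i) (h1 j) ⊗ₜ[k] act (b2 i) (h2 j)
  cm_mul : ∀ (b b' : B) (ι : Type) [Fintype ι] (b1 b2 : ι → B)
      (κ : Type) [Fintype κ] (b1' b2' : κ → B)
      (ρ : Type) [Fintype ρ] (r1 r2 : ρ → H),
      cm b = ∑ i, b1 i ⊗ₜ[k] b2 i → cm b' = ∑ j, b1' j ⊗ₜ[k] b2' j →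
      R = ∑ r, r1 r ⊗ₜ[k] r2 r →
      cm (b * b') = ∑ i, ∑ j, ∑ r,
        (b1 i * act (b1' j) (r1 r)) ⊗ₜ[k] (act (b2 i) (r2 r) * b2' j)
  antipode_left : ∀ (b : B) (ι : Type) [Fintype ι] (b1 b2 : ι → B),
      cm b = ∑ i, b1 i ⊗ₜ[k] b2 i → ∑ i, S (b1 i) * b2 i = cu b • (1 : B)
  antipode_right : ∀ (b : B) (ι : Type) [Fintype ι] (b1 b2 : ι → B),
      cm b = ∑ i, b1 i ⊗ₜ[k] b2 i → ∑ i, b1 i * S (b2 i) = cu b • (1 : B)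
  antipode_act : ∀ b h, S (act b h) = act (S b) h

/-- A braided group in the braided category of left `H`-modules, with braiding
`Ψ(v ⊗ w) = (ρ⁽²⁾ ▷ w) ⊗ (ρ⁽¹⁾ ▷ v)` determined by the quasitriangular element `ρ`. -/
structure IsBraidedGroupL (rho : H ⊗[k] H) (C : Type) [Ring C] [Algebra k C]
    (act : H →ₗ[k] C →ₗ[k] C) (cm : C →ₗ[k] C ⊗[k] C)
    (cu : C →ₗ[k] k) (S : C →ₗ[k] C) : Prop where
  modAlg : IsModAlgL k H C act
  coassoc : (TensorProduct.assoc k C C C).toLinearMap ∘ₗ LinearMap.rTensor C cm ∘ₗ cm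
      = LinearMap.lTensor C cm ∘ₗ cm
  counit_left : (TensorProduct.lid k C).toLinearMap ∘ₗ LinearMap.rTensor C cu ∘ₗ cm
      = LinearMap.id
  counit_right : (TensorProduct.rid k C).toLinearMap ∘ₗ LinearMap.lTensor C cu ∘ₗ cm
      = LinearMap.id
  cu_one : cu 1 = 1
  cu_mul : ∀ c c', cu (c * c') = cu c * cu c'
  cu_act : ∀ h c, cu (act h c) = Coalgebra.counit (R := k) h * cu c
  cm_one : cm 1 = 1 ⊗ₜ[k] 1
  cm_act : ∀ (c : C) (h : H) (ι : Type) [Fintype ι] (c1 c2 : ι → C)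
      (κ : Type) [Fintype κ] (h1 h2 : κ → H),
      cm c = ∑ i, c1 i ⊗ₜ[k] c2 i →
      Coalgebra.comul (R := k) h = ∑ j, h1 j ⊗ₜ[k] h2 j →
      cm (act h c) = ∑ i, ∑ j, act (h1 j) (c1 i) ⊗ₜ[k] act (h2 j) (c2 i)
  cm_mul : ∀ (c c' : C) (ι : Type) [Fintype ι] (c1 c2 : ι → C)
      (κ : Type) [Fintype κ] (c1' c2' : κ → C)
      (σ : Type) [Fintype σ] (r1 r2 : σ → H),
      cm c = ∑ i, c1 i ⊗ₜ[k] c2 i → cm c' = ∑ j, c1' j ⊗ₜ[k] c2' j →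
      rho = ∑ r, r1 r ⊗ₜ[k] r2 r →
      cm (c * c') = ∑ i, ∑ j, ∑ r,
        (c1 i * act (r2 r) (c1' j)) ⊗ₜ[k] (act (r1 r) (c2 i) * c2' j)
  antipode_left : ∀ (c : C) (ι : Type) [Fintype ι] (c1 c2 : ι → C),
      cm c = ∑ i, c1 i ⊗ₜ[k] c2 i → ∑ i, S (c1 i) * c2 i = cu c • (1 : C)
  antipode_right : ∀ (c : C) (ι : Type) [Fintype ι] (c1 c2 : ι → C),
      cm c = ∑ i, c1 i ⊗ₜ[k] c2 i → ∑ i, c1 i * S (c2 i) = cu c • (1 : C)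
  antipode_act : ∀ h c, S (act h c) = act h (S c)

/-- The categorical duality pairing `ev : C ⊗ B → k` between braided groups `C, B`
in the category of right `H`-modules: `ev(cd,b) = ev(d,b₍₁₎)ev(c,b₍₂₎)`,
`ev(c,ab) = ev(c₍₂₎,a)ev(c₍₁₎,b)`, and `ev` is an `H`-module map. -/
structure IsCatPairing (B C : Type) [Ring B] [Algebra k B] [Ring C] [Algebra k C]
    (actB : B →ₗ[k] H →ₗ[k] B) (cmB : B →ₗ[k] B ⊗[k] B) (cuB : B →ₗ[k] k)
    (actC : C →ₗ[k] H →ₗ[k] C) (cmC : C →ₗ[k] C ⊗[k] C) (cuC : C →ₗ[k] k)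
    (ev : C →ₗ[k] B →ₗ[k] k) : Prop where
  equivariant : ∀ (c : C) (b : B) (h : H) (ι : Type) [Fintype ι] (h1 h2 : ι → H),
    Coalgebra.comul (R := k) h = ∑ j, h1 j ⊗ₜ[k] h2 j →
    ∑ j, ev (actC c (h1 j)) (actB b (h2 j)) = ev c b * Coalgebra.counit (R := k) h
  mul_left : ∀ (c d : C) (b : B) (ι : Type) [Fintype ι] (b1 b2 : ι → B),
    cmB b = ∑ i, b1 i ⊗ₜ[k] b2 i →
    ev (c * d) b = ∑ i, ev d (b1 i) * ev c (b2 i)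
  mul_right : ∀ (c : C) (a b : B) (ι : Type) [Fintype ι] (c1 c2 : ι → C),
    cmC c = ∑ i, c1 i ⊗ₜ[k] c2 i →
    ev c (a * b) = ∑ i, ev (c2 i) a * ev (c1 i) b
  one_left : ∀ b, ev 1 b = cuB b
  one_right : ∀ c, ev c 1 = cuC c


section Stmt0

variable (D : Type) [Ring D] [Algebra k D]

/-- The inverse `Ψ⁻¹` of the braiding of left `H`-modules:
`Ψ⁻¹(v ⊗ w) = (𝓡⁻⁽¹⁾ ▷ w) ⊗ (𝓡⁻⁽²⁾ ▷ v)`. -/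
noncomputable def braidLinv (Rinv : H ⊗[k] H) (act : H →ₗ[k] D →ₗ[k] D) :
    D ⊗[k] D →ₗ[k] D ⊗[k] D :=
  (TensorProduct.map (TensorProduct.lift act) (TensorProduct.lift act))
    ∘ₗ tttc k H H D D
    ∘ₗ (TensorProduct.mk k (H ⊗[k] H) (D ⊗[k] D) Rinv)
    ∘ₗ (TensorProduct.comm k D D).toLinearMap


end Stmt0
section Abstract
open CategoryTheory MonoidalCategory BraidedCategory MonObj ComonObj HopfObj
universe v u
variable {C : Type u} [Category.{v} C] [MonoidalCategory.{v} C] [BraidedCategory C]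

theorem cop_coassoc_aux (D : C) :
    (β_ (D ⊗ D) D).inv ≫ (β_ D D).inv ▷ D ≫ (α_ D D D).hom
      = (α_ D D D).inv ≫ (β_ D (D ⊗ D)).inv ≫ D ◁ (β_ D D).inv := by
  rw [braiding_tensor_left_inv, braiding_tensor_right_inv]
  have := congrArg (fun t => t.inv) (yang_baxter_iso D D D)
  simp at this ⊢
  simp [this]

theorem cop_coassoc (D : C) [ComonObj D] :
    (Δ[D] ≫ (β_ D D).inv) ≫ (Δ[D] ≫ (β_ D D).inv) ▷ D ≫ (α_ D D D).hom
      = (Δ[D] ≫ (β_ D D).inv) ≫ D ◁ (Δ[D] ≫ (β_ D D).inv) := by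
  simp only [comp_whiskerRight, whiskerLeft_comp, Category.assoc]
  rw [← braiding_inv_naturality_right_assoc, ← braiding_inv_naturality_left_assoc,
    cop_coassoc_aux, ComonObj.comul_assoc_flip_assoc]
  
theorem cop_counit_left (D : C) [ComonObj D] :
    (Δ[D] ≫ (β_ D D).inv) ≫ ε[D] ▷ D ≫ (λ_ D).hom = 𝟙 D := by
  simp [← braiding_inv_naturality_right_assoc]

theorem cop_counit_right (D : C) [ComonObj D] :
    (Δ[D] ≫ (β_ D D).inv) ≫ D ◁ ε[D] ≫ (ρ_ D).hom = 𝟙 D := by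
  simp [← braiding_inv_naturality_left_assoc]

theorem cop_mul_aux (D : C) :
   tensorμ D D D D ≫ (β_ (D ⊗ D) (D ⊗ D)).inv =
    ((β_ D D).inv ⊗ₘ (β_ D D).inv) ≫ (α_ D D (D ⊗ D)).hom ≫
    D ◁ (α_ D D D).inv ≫ D ◁ ((β_ D D).inv ▷ D) ≫ D ◁ (α_ D D D).hom ≫ (α_ D D (D ⊗ D)).inv := by
  have h : (β_ (D ⊗ D) (D ⊗ D)).inv = tensorδ D D D D ≫ ((β_ D D).inv ⊗ₘ (β_ D D).inv) ≫ (α_ D D (D ⊗ D)).hom ≫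
    D ◁ (α_ D D D).inv ≫ D ◁ ((β_ D D).inv ▷ D) ≫ D ◁ (α_ D D D).hom ≫ (α_ D D (D ⊗ D)).inv := by
    simp only [tensorδ, braiding_tensor_left_inv, braiding_tensor_right_inv, MonoidalCategory.tensorHom_def']
    monoidal
  rw [h, tensorμ_tensorδ_assoc]

theorem cop_mul (D : C) [BimonObj D] :
    μ[D] ≫ Δ[D] ≫ (β_ D D).inv = ((Δ[D] ≫ (β_ D D).inv) ⊗ₘ (Δ[D] ≫ (β_ D D).inv)) ≫ 
    (α_ D D (D ⊗ D)).hom ≫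
    D ◁ (α_ D D D).inv ≫ D ◁ ((β_ D D).inv ▷ D) ≫ D ◁ (α_ D D D).hom ≫ (α_ D D (D ⊗ D)).inv
     ≫ (μ[D] ⊗ₘ μ[D]) := by
  rw [BimonObj.mul_comul_assoc, braiding_inv_naturality]
  have := cop_mul_aux D
  rw [reassoc_of% this]
  simp

theorem cop_antipode_left (D : C) [HopfObj D] (T : D ⟶ D) (h1 : 𝒮[D] ≫ T = 𝟙 D) (h2 : T ≫ 𝒮[D] = 𝟙 D) :
    (Δ[D] ≫ (β_ D D).inv) ≫ T ▷ D ≫ μ[D] = ε[D] ≫ η[D] := by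
  have : ((Δ[D] ≫ (β_ D D).inv) ≫ T ▷ D ≫ μ[D]) ≫ 𝒮[D] = (ε[D] ≫ η[D]) ≫ 𝒮[D] := by
    simp only [Category.assoc, HopfObj.mul_antipode, one_antipode]
    rw [MonoidalCategory.tensorHom_def, Category.assoc, ← comp_whiskerRight_assoc, h2]
    simp [braiding_naturality_right_assoc]
  have h3 : η[D] ≫ T = η[D] := by
    conv_lhs => rw [← one_antipode D, Category.assoc, h1, Category.comp_id]
  simpa [h1, h3] using congrArg (· ≫ T) this

theorem cop_antipode_right (D : C) [HopfObj D] (T : D ⟶ D) (h1 : 𝒮[D] ≫ T = 𝟙 D) (h2 : T ≫ 𝒮[D] = 𝟙 D) :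
    (Δ[D] ≫ (β_ D D).inv) ≫ D ◁ T ≫ μ[D] = ε[D] ≫ η[D] := by
  have : ((Δ[D] ≫ (β_ D D).inv) ≫ D ◁ T ≫ μ[D]) ≫ 𝒮[D] = (ε[D] ≫ η[D]) ≫ 𝒮[D] := by
    simp only [Category.assoc, HopfObj.mul_antipode, one_antipode]
    rw [MonoidalCategory.tensorHom_def', Category.assoc, ← whiskerLeft_comp_assoc, h2]
    simp [braiding_naturality_left_assoc]
  have h3 : η[D] ≫ T = η[D] := by
    conv_lhs => rw [← one_antipode D, Category.assoc, h1, Category.comp_id]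
  simpa [h1, h3] using congrArg (· ≫ T) this
end Abstract

section ConcreteCat
set_option linter.unusedVariables false
set_option linter.unusedSimpArgs false
open CategoryTheory MonoidalCategory

theorem exRep {V W : Type} [AddCommGroup V] [Module k V] [AddCommGroup W] [Module k W]
    (t : V ⊗[k] W) : ∃ (n : ℕ) (v : Fin n → V) (w : Fin n → W), t = ∑ i, v i ⊗ₜ[k] w i := by
  induction t with
  | zero => exact ⟨0, Fin.elim0, Fin.elim0, by simp⟩
  | tmul x y => exact ⟨1, fun _ => x, fun _ => y, by simp⟩
  | add x y hx hy =>
    obtain ⟨n, v, w, rfl⟩ := hx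
    obtain ⟨m, v', w', rfl⟩ := hy
    exact ⟨n + m, Fin.append v v', Fin.append w w', by simp [Fin.sum_univ_add]⟩

/-- Left `H`-modules. -/
structure HM where
  carrier : Type
  [acg : AddCommGroup carrier]
  [mod : Module k carrier]
  ρ : H →ₐ[k] Module.End k carrier

attribute [instance] HM.acg HM.mod

namespace HM
variable {k H}

/-- Equivariant maps. -/
@[ext]
structure Hom' (X Y : HM k H) where
  lin : X.carrier →ₗ[k] Y.carrier
  comm : ∀ h x, lin (X.ρ h x) = Y.ρ h (lin x)

instance : Category (HM k H) where
  Hom X Y := Hom' X Y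
  id X := ⟨LinearMap.id, fun _ _ => rfl⟩
  comp f g := ⟨g.lin ∘ₗ f.lin, fun h x => by simp [f.comm, g.comm]⟩

theorem hext {X Y : HM k H} {f g : X ⟶ Y} (h : f.lin = g.lin) : f = g := Hom'.ext h

@[simp] theorem id_lin (X : HM k H) : Hom'.lin (𝟙 X) = LinearMap.id := rfl
@[simp] theorem comp_lin {X Y Z : HM k H} (f : X ⟶ Y) (g : Y ⟶ Z) :
    Hom'.lin (f ≫ g) = g.lin ∘ₗ f.lin := rfl

/-- action of `H ⊗ H` on `X ⊗ Y`. -/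
noncomputable def act2 (X Y : HM k H) :
    H ⊗[k] H →ₐ[k] Module.End k (X.carrier ⊗[k] Y.carrier) :=
  (Module.endTensorEndAlgHom (R := k) (S := k) (A := k)).comp (Algebra.TensorProduct.map X.ρ Y.ρ)

@[simp] theorem act2_tmul (X Y : HM k H) (a b : H) (x : X.carrier) (y : Y.carrier) :
    act2 X Y (a ⊗ₜ b) (x ⊗ₜ y) = X.ρ a x ⊗ₜ Y.ρ b y := rfl

theorem act2_nat {X Y X' Y' : HM k H} (f : X ⟶ X') (g : Y ⟶ Y') (t : H ⊗[k] H)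
    (z : X.carrier ⊗[k] Y.carrier) :
    TensorProduct.map f.lin g.lin (act2 X Y t z) = act2 X' Y' t (TensorProduct.map f.lin g.lin z) := by
  induction t with
  | zero => simp
  | add a b ha hb => simp [ha, hb]
  | tmul a b =>
    induction z with
    | zero => simp
    | add a b ha hb => simp only [map_add, ha, hb]
    | tmul x y => simp [f.comm, g.comm]

/-- tensor product of modules -/
noncomputable def tens (X Y : HM k H) : HM k H :=
  ⟨X.carrier ⊗[k] Y.carrier, (act2 X Y).comp (Bialgebra.comulAlgHom k H)⟩

/-- unit module -/
noncomputable def unitM : HM k H :=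
  ⟨k, (Algebra.ofId k (Module.End k k)).comp (Bialgebra.counitAlgHom k H)⟩

theorem tens_ρ (X Y : HM k H) (h : H) :
    (tens X Y).ρ h = act2 X Y (Coalgebra.comul (R := k) h) := rfl

theorem unit_ρ (h : H) (x : k) : (unitM (k := k) (H := H)).ρ h x = Coalgebra.counit (R := k) h * x := rfl

/-- action of `H ⊗ (H ⊗ H)`. -/
noncomputable def act3 (X Y Z : HM k H) :
    H ⊗[k] (H ⊗[k] H) →ₐ[k] Module.End k (X.carrier ⊗[k] (Y.carrier ⊗[k] Z.carrier)) :=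
  (Module.endTensorEndAlgHom (R := k) (S := k) (A := k)).comp
    (Algebra.TensorProduct.map X.ρ (act2 Y Z))

theorem act3_tmul (X Y Z : HM k H) (a : H) (b : H ⊗[k] H) (x : X.carrier)
    (y : Y.carrier ⊗[k] Z.carrier) :
    act3 X Y Z (a ⊗ₜ b) (x ⊗ₜ y) = X.ρ a x ⊗ₜ act2 Y Z b y := rfl

theorem act2_right (X Y Z : HM k H) (t : H ⊗[k] H) :
    act2 X (tens Y Z) t = act3 X Y Z (TensorProduct.map LinearMap.id (Coalgebra.comul (R := k)) t) := by
  induction t with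
  | zero => simp; rfl
  | add a b ha hb => rw [map_add, ha, hb, map_add, map_add]; rfl
  | tmul a b => rfl

/-- action of `(H ⊗ H) ⊗ H`. -/
noncomputable def act3' (X Y Z : HM k H) :
    (H ⊗[k] H) ⊗[k] H →ₐ[k] Module.End k ((X.carrier ⊗[k] Y.carrier) ⊗[k] Z.carrier) :=
  (Module.endTensorEndAlgHom (R := k) (S := k) (A := k)).comp
    (Algebra.TensorProduct.map (act2 X Y) Z.ρ)

theorem act3'_tmul (X Y Z : HM k H) (a : H ⊗[k] H) (b : H) (x : X.carrier ⊗[k] Y.carrier)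
    (y : Z.carrier) :
    act3' X Y Z (a ⊗ₜ b) (x ⊗ₜ y) = act2 X Y a x ⊗ₜ Z.ρ b y := rfl

theorem act2_left (X Y Z : HM k H) (t : H ⊗[k] H) :
    act2 (tens X Y) Z t = act3' X Y Z (TensorProduct.map (Coalgebra.comul (R := k)) LinearMap.id t) := by
  induction t with
  | zero => simp; rfl
  | add a b ha hb => rw [map_add, ha, hb, map_add, map_add]; rfl
  | tmul a b => rfl

theorem act3_assoc (X Y Z : HM k H) (t : (H ⊗[k] H) ⊗[k] H)
    (z : (X.carrier ⊗[k] Y.carrier) ⊗[k] Z.carrier) :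
    TensorProduct.assoc k _ _ _ (act3' X Y Z t z) =
      act3 X Y Z (TensorProduct.assoc k _ _ _ t) (TensorProduct.assoc k _ _ _ z) := by
  induction t with
  | zero => simp
  | add a b ha hb => simp only [map_add, LinearMap.add_apply, ha, hb]
  | tmul a b =>
  induction a with
  | zero => simp
  | add a b ha hb => simp only [map_add, TensorProduct.add_tmul, LinearMap.add_apply, ha, hb]
  | tmul a c =>
  induction z with
  | zero => simp
  | add a b ha hb => simp only [map_add, LinearMap.add_apply, ha, hb]
  | tmul x y =>
  induction x with
  | zero => simp
  | add a b ha hb => simp only [map_add, TensorProduct.add_tmul, LinearMap.add_apply, ha, hb]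
  | tmul x y => rfl

/-- action on `k ⊗ Y`. -/
noncomputable def actUL (Y : HM k H) : H ⊗[k] H →ₐ[k] Module.End k (k ⊗[k] Y.carrier) :=
  (Module.endTensorEndAlgHom (R := k) (S := k) (A := k)).comp (Algebra.TensorProduct.map
    ((Algebra.ofId k (Module.End k k)).comp (Bialgebra.counitAlgHom k H)) Y.ρ)

/-- action on `Y ⊗ k`. -/
noncomputable def actUR (Y : HM k H) : H ⊗[k] H →ₐ[k] Module.End k (Y.carrier ⊗[k] k) :=
  (Module.endTensorEndAlgHom (R := k) (S := k) (A := k)).comp (Algebra.TensorProduct.map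
    Y.ρ ((Algebra.ofId k (Module.End k k)).comp (Bialgebra.counitAlgHom k H)))

theorem act2_counit_left (Y : HM k H) (t : H ⊗[k] H) (z : k ⊗[k] Y.carrier) :
    TensorProduct.lid k _ (actUL Y t z) =
      Y.ρ (TensorProduct.lid k _ (TensorProduct.map (Coalgebra.counit (R := k)) LinearMap.id t))
        (TensorProduct.lid k _ z) := by
  induction t with
  | zero => simp
  | add a b ha hb => simp only [map_add, LinearMap.add_apply, ha, hb]
  | tmul a b =>
  induction z with
  | zero => simp
  | add a b ha hb => simp only [map_add, ha, hb]
  | tmul x y =>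
  refine Eq.trans (b := (Coalgebra.counit (R := k) a * x) • Y.ρ b y) rfl ?_
  simp [mul_smul, smul_comm x]

theorem act2_counit_right (Y : HM k H) (t : H ⊗[k] H) (z : Y.carrier ⊗[k] k) :
    TensorProduct.rid k _ (actUR Y t z) =
      Y.ρ (TensorProduct.rid k _ (TensorProduct.map LinearMap.id (Coalgebra.counit (R := k)) t))
        (TensorProduct.rid k _ z) := by
  induction t with
  | zero => simp
  | add a b ha hb => simp only [map_add, LinearMap.add_apply, ha, hb]
  | tmul a b =>
  induction z with
  | zero => simp
  | add a b ha hb => simp only [map_add, ha, hb]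
  | tmul x y =>
  refine Eq.trans (b := (Coalgebra.counit (R := k) b * y) • Y.ρ a x) rfl ?_
  simp [mul_smul, smul_comm y]

/-- isomorphisms -/
noncomputable def mkIso {X Y : HM k H} (e : X.carrier ≃ₗ[k] Y.carrier)
    (h : ∀ h x, e (X.ρ h x) = Y.ρ h (e x)) : X ≅ Y where
  hom := ⟨e.toLinearMap, h⟩
  inv := ⟨e.symm.toLinearMap, fun g x => by
    apply e.injective
    simp [h]⟩
  hom_inv_id := hext (by ext; simp)
  inv_hom_id := hext (by ext; simp)

noncomputable instance : MonoidalCategoryStruct (HM k H) where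
  tensorObj X Y := tens X Y
  tensorUnit := unitM
  tensorHom f g := ⟨TensorProduct.map f.lin g.lin, fun _ _ => act2_nat f g _ _⟩
  whiskerLeft X _ _ g := ⟨TensorProduct.map LinearMap.id g.lin, fun _ _ => act2_nat (𝟙 X) g _ _⟩
  whiskerRight f Y := ⟨TensorProduct.map f.lin LinearMap.id, fun _ _ => act2_nat f (𝟙 Y) _ _⟩
  associator X Y Z := mkIso (X := tens (tens X Y) Z) (Y := tens X (tens Y Z))
    (TensorProduct.assoc k X.carrier Y.carrier Z.carrier) (fun h x => by
      rw [tens_ρ, tens_ρ, act2_left, act2_right]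
      refine (act3_assoc X Y Z _ _).trans ?_
      congr 2
      exact Coalgebra.coassoc_apply h)
  leftUnitor X := mkIso (X := tens unitM X) (TensorProduct.lid k X.carrier) (fun h x => by
      rw [tens_ρ]
      refine (act2_counit_left X _ x).trans ?_
      have := Coalgebra.rTensor_counit_comul (R := k) h
      rw [LinearMap.rTensor] at this
      rw [this]; simp; rfl)
  rightUnitor X := mkIso (X := tens X unitM) (TensorProduct.rid k X.carrier) (fun h x => by
      rw [tens_ρ]
      refine (act2_counit_right X _ x).trans ?_
      have := Coalgebra.lTensor_counit_comul (R := k) h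
      rw [LinearMap.lTensor] at this
      rw [this]; simp; rfl)

noncomputable instance : MonoidalCategory (HM k H) where
  tensorHom_def f g := hext (TensorProduct.ext' fun x y => rfl)
  id_tensorHom_id X Y := hext (TensorProduct.ext' fun x y => rfl)
  tensorHom_comp_tensorHom f g f' g' := hext (TensorProduct.ext' fun x y => rfl)
  whiskerLeft_id X Y := hext (TensorProduct.ext' fun x y => rfl)
  id_whiskerRight X Y := hext (TensorProduct.ext' fun x y => rfl)
  associator_naturality f g h := hext (TensorProduct.ext_threefold fun x y z => rfl)
  leftUnitor_naturality f := hext (TensorProduct.ext' fun x y => (f.lin.map_smul x y).symm)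
  rightUnitor_naturality f := hext (TensorProduct.ext' fun x y => (f.lin.map_smul y x).symm)
  pentagon W X Y Z := hext (TensorProduct.ext_fourfold fun x y z w => rfl)
  triangle X Y := hext (TensorProduct.ext_threefold fun x y z => (TensorProduct.smul_tmul (R := k) (show k from y) x z).symm)

end HM
end ConcreteCat

section Braiding
open CategoryTheory MonoidalCategory
namespace HM
variable {k H}

/-- The braiding as linear map. -/
noncomputable def brL (R : H ⊗[k] H) (X Y : HM k H) :
    X.carrier ⊗[k] Y.carrier →ₗ[k] Y.carrier ⊗[k] X.carrier :=
  (TensorProduct.comm k _ _).toLinearMap ∘ₗ act2 X Y R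

theorem brL_apply (R : H ⊗[k] H) (X Y : HM k H) (z) :
    brL R X Y z = TensorProduct.comm k _ _ (act2 X Y R z) := rfl

theorem comm_act2 (X Y : HM k H) (t : H ⊗[k] H) (z : X.carrier ⊗[k] Y.carrier) :
    TensorProduct.comm k _ _ (act2 X Y t z) =
      act2 Y X (TensorProduct.comm k _ _ t) (TensorProduct.comm k _ _ z) := by
  induction t with
  | zero => simp
  | add a b ha hb => simp only [map_add, LinearMap.add_apply, ha, hb]
  | tmul a b =>
  induction z with
  | zero => simp
  | add a b ha hb => simp only [map_add, ha, hb]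
  | tmul x y => rfl

/-- The braiding as linear equivalence. -/
noncomputable def brE {R Rinv : H ⊗[k] H} (hQT : IsQT k H R Rinv) (X Y : HM k H) :
    X.carrier ⊗[k] Y.carrier ≃ₗ[k] Y.carrier ⊗[k] X.carrier :=
  LinearEquiv.ofLinearMap (brL R X Y) (act2 X Y Rinv ∘ₗ (TensorProduct.comm k _ _).toLinearMap)
    (by
      apply LinearMap.ext; intro z
      simp only [brL, LinearMap.comp_apply, LinearEquiv.coe_coe, LinearMap.id_apply]
      rw [← Module.End.mul_apply, ← map_mul, hQT.mul_inv]; simp)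
    (by
      apply LinearMap.ext; intro z
      simp only [brL, LinearMap.comp_apply, LinearEquiv.coe_coe, LinearMap.id_apply]
      rw [TensorProduct.comm_comm, ← Module.End.mul_apply, ← map_mul, hQT.inv_mul]; simp)

theorem hexA (X Y Z : HM k H) (t : H ⊗[k] H) (w : (X.carrier ⊗[k] Y.carrier) ⊗[k] Z.carrier) :
    act3 X Y Z (LinearMap.lTensor H (Algebra.TensorProduct.includeLeft
          (R := k) (S := k) (A := H) (B := H)).toLinearMap t) (TensorProduct.assoc k _ _ _ w) =
    TensorProduct.assoc k _ _ _ (TensorProduct.map (act2 X Y t) LinearMap.id w) := by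
  induction t with
  | zero => simp
  | add a b ha hb => simp only [map_add, TensorProduct.map_add_left, LinearMap.add_apply, ha, hb]
  | tmul a b =>
  induction w with
  | zero => simp
  | add a b ha hb => simp only [map_add, ha, hb]
  | tmul x z =>
  induction x with
  | zero => simp
  | add a b ha hb => simp only [map_add, TensorProduct.add_tmul, ha, hb]
  | tmul x y => simp [act3_tmul]

theorem hexB (X Y Z : HM k H) (t : H ⊗[k] H) (w : (X.carrier ⊗[k] Y.carrier) ⊗[k] Z.carrier) :
    TensorProduct.assoc k _ _ _ (TensorProduct.comm k _ _
      (act3 X Y Z (LinearMap.lTensor H (Algebra.TensorProduct.includeRight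
          (R := k) (A := H) (B := H)).toLinearMap t) (TensorProduct.assoc k _ _ _ w))) =
    TensorProduct.map LinearMap.id (brL t X Z) (TensorProduct.assoc k _ _ _
      (TensorProduct.map (TensorProduct.comm k _ _).toLinearMap LinearMap.id w)) := by
  induction t with
  | zero => simp [brL]
  | add a b ha hb =>
    have : brL (a + b) X Z = brL a X Z + brL b X Z := by simp [brL, LinearMap.comp_add]
    simp only [map_add, this, TensorProduct.map_add_right, LinearMap.add_apply, ha, hb]
  | tmul a b =>
  induction w with
  | zero => simp
  | add a b ha hb => simp only [map_add, ha, hb]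
  | tmul x z =>
  induction x with
  | zero => simp
  | add a b ha hb => simp only [map_add, TensorProduct.add_tmul, ha, hb]
  | tmul x y => simp [act3_tmul, brL]

theorem hexA' (X Y Z : HM k H) (t : H ⊗[k] H) (w : X.carrier ⊗[k] (Y.carrier ⊗[k] Z.carrier)) :
    act3' X Y Z (LinearMap.rTensor H (Algebra.TensorProduct.includeRight
          (R := k) (A := H) (B := H)).toLinearMap t) ((TensorProduct.assoc k _ _ _).symm w) =
    (TensorProduct.assoc k _ _ _).symm (TensorProduct.map LinearMap.id (act2 Y Z t) w) := by
  induction t with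
  | zero => simp
  | add a b ha hb => simp only [map_add, TensorProduct.map_add_right, LinearMap.add_apply, ha, hb]
  | tmul a b =>
  induction w with
  | zero => simp
  | add a b ha hb => simp only [map_add, ha, hb]
  | tmul x z =>
  induction z with
  | zero => simp
  | add a b ha hb => simp only [map_add, TensorProduct.tmul_add, ha, hb]
  | tmul x y => simp [act3'_tmul]

theorem hexB' (X Y Z : HM k H) (t : H ⊗[k] H) (w : X.carrier ⊗[k] (Y.carrier ⊗[k] Z.carrier)) :
    (TensorProduct.assoc k _ _ _).symm (TensorProduct.comm k _ _
      (act3' X Y Z (LinearMap.rTensor H (Algebra.TensorProduct.includeLeft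
          (R := k) (S := k) (A := H) (B := H)).toLinearMap t)
          ((TensorProduct.assoc k _ _ _).symm w))) =
    TensorProduct.map (brL t X Z) LinearMap.id ((TensorProduct.assoc k _ _ _).symm
      (TensorProduct.map LinearMap.id (TensorProduct.comm k _ _).toLinearMap w)) := by
  induction t with
  | zero => simp [brL]
  | add a b ha hb =>
    have : brL (a + b) X Z = brL a X Z + brL b X Z := by simp [brL, LinearMap.comp_add]
    simp only [map_add, this, TensorProduct.map_add_left, LinearMap.add_apply, ha, hb]
  | tmul a b =>
  induction w with
  | zero => simp
  | add a b ha hb => simp only [map_add, ha, hb]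
  | tmul x z =>
  induction z with
  | zero => simp
  | add a b ha hb => simp only [map_add, TensorProduct.tmul_add, ha, hb]
  | tmul x y => simp [act3'_tmul, brL]

theorem brL_hex {R Rinv : H ⊗[k] H} (hQT : IsQT k H R Rinv) (X Y Z : HM k H)
    (w : (X.carrier ⊗[k] Y.carrier) ⊗[k] Z.carrier) :
    TensorProduct.assoc k Y.carrier Z.carrier X.carrier (brL R X (tens Y Z)
      (TensorProduct.assoc k X.carrier Y.carrier Z.carrier w)) =
    TensorProduct.map LinearMap.id (brL R X Z) (TensorProduct.assoc k _ _ _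
      (TensorProduct.map (brL R X Y) LinearMap.id w)) := by
  refine Eq.trans (b := TensorProduct.assoc k Y.carrier Z.carrier X.carrier
    (TensorProduct.comm k X.carrier (Y.carrier ⊗[k] Z.carrier) (act3 X Y Z
      (TensorProduct.map LinearMap.id (Coalgebra.comul (R := k)) R)
        (TensorProduct.assoc k X.carrier Y.carrier Z.carrier w))))
    (congrArg (fun z : Module.End k (X.carrier ⊗[k] (Y.carrier ⊗[k] Z.carrier)) =>
      TensorProduct.assoc k Y.carrier Z.carrier X.carrier
      (TensorProduct.comm k X.carrier (Y.carrier ⊗[k] Z.carrier)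
        (z (TensorProduct.assoc k X.carrier Y.carrier Z.carrier w)))) (act2_right X Y Z R)) ?_
  rw [hQT.comul_snd, map_mul]
  refine Eq.trans (congrArg (fun z => TensorProduct.assoc k Y.carrier Z.carrier X.carrier
    (TensorProduct.comm k X.carrier (Y.carrier ⊗[k] Z.carrier) (act3 X Y Z _ z)))
    (hexA X Y Z R w)) ?_
  refine (hexB X Y Z R _).trans ?_
  rw [← LinearMap.comp_apply (TensorProduct.map _ _) (TensorProduct.map _ _),
    ← TensorProduct.map_comp]
  rfl

theorem brL_hex' {R Rinv : H ⊗[k] H} (hQT : IsQT k H R Rinv) (X Y Z : HM k H)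
    (w : X.carrier ⊗[k] (Y.carrier ⊗[k] Z.carrier)) :
    (TensorProduct.assoc k Z.carrier X.carrier Y.carrier).symm (brL R (tens X Y) Z
      ((TensorProduct.assoc k X.carrier Y.carrier Z.carrier).symm w)) =
    TensorProduct.map (brL R X Z) LinearMap.id ((TensorProduct.assoc k _ _ _).symm
      (TensorProduct.map LinearMap.id (brL R Y Z) w)) := by
  refine Eq.trans (b := (TensorProduct.assoc k Z.carrier X.carrier Y.carrier).symm
    (TensorProduct.comm k (X.carrier ⊗[k] Y.carrier) Z.carrier (act3' X Y Z
      (TensorProduct.map (Coalgebra.comul (R := k)) LinearMap.id R)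
        ((TensorProduct.assoc k X.carrier Y.carrier Z.carrier).symm w))))
    (congrArg (fun z : Module.End k ((X.carrier ⊗[k] Y.carrier) ⊗[k] Z.carrier) =>
      (TensorProduct.assoc k Z.carrier X.carrier Y.carrier).symm
      (TensorProduct.comm k (X.carrier ⊗[k] Y.carrier) Z.carrier
        (z ((TensorProduct.assoc k X.carrier Y.carrier Z.carrier).symm w)))) (act2_left X Y Z R)) ?_
  rw [hQT.comul_fst, map_mul]
  refine Eq.trans (congrArg (fun z => (TensorProduct.assoc k Z.carrier X.carrier Y.carrier).symm
    (TensorProduct.comm k (X.carrier ⊗[k] Y.carrier) Z.carrier (act3' X Y Z _ z)))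
    (hexA' X Y Z R w)) ?_
  refine (hexB' X Y Z R _).trans ?_
  rw [← LinearMap.comp_apply (TensorProduct.map _ _) (TensorProduct.map _ _),
    ← TensorProduct.map_comp]
  rfl

theorem brL_nat (R : H ⊗[k] H) {X Y X' Y' : HM k H} (f : X ⟶ X') (g : Y ⟶ Y')
    (z : X.carrier ⊗[k] Y.carrier) :
    TensorProduct.map g.lin f.lin (brL R X Y z) = brL R X' Y' (TensorProduct.map f.lin g.lin z) := by
  rw [brL_apply, brL_apply, ← act2_nat, TensorProduct.map_comm]

theorem brL_equiv {R Rinv : H ⊗[k] H} (hQT : IsQT k H R Rinv) (X Y : HM k H) (h : H)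
    (x : X.carrier ⊗[k] Y.carrier) :
    brL R X Y (act2 X Y (Coalgebra.comul (R := k) h) x) =
      act2 Y X (Coalgebra.comul (R := k) h) (brL R X Y x) := by
  rw [brL_apply, brL_apply, ← Module.End.mul_apply, ← map_mul, ← hQT.quasi_comm, map_mul,
    Module.End.mul_apply, comm_act2, TensorProduct.comm_comm]

/-- The braided category. -/
noncomputable abbrev braided {R Rinv : H ⊗[k] H} (hQT : IsQT k H R Rinv) :
    BraidedCategory (HM k H) where
  braiding X Y := mkIso (X := tens X Y) (Y := tens Y X) (brE hQT X Y) (brL_equiv hQT X Y)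
  braiding_naturality_right X _ _ f := hext (LinearMap.ext fun z => (brL_nat R (𝟙 X) f z).symm)
  braiding_naturality_left f Z := hext (LinearMap.ext fun z => (brL_nat R f (𝟙 Z) z).symm)
  hexagon_forward X Y Z := hext (LinearMap.ext fun z => brL_hex hQT X Y Z z)
  hexagon_reverse X Y Z := hext (LinearMap.ext fun z => brL_hex' hQT X Y Z z)

end HM
end Braiding

section Abstract2
open CategoryTheory MonoidalCategory BraidedCategory MonObj ComonObj HopfObj
universe v u

theorem cop_one {C : Type u} [Category.{v} C] [MonoidalCategory.{v} C] [BraidedCategory C]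
    (D : C) [BimonObj D] :
    η[D] ≫ Δ[D] ≫ (β_ D D).inv = (λ_ (𝟙_ C)).inv ≫ (η[D] ⊗ₘ η[D]) := by
  rw [Bimon.one_comul_assoc, braiding_inv_naturality, braiding_inv_tensorUnit_left]
  simp [unitors_inv_equal, unitors_equal]

end Abstract2

section HopfD
open CategoryTheory MonoidalCategory
variable {k H}
variable {D : Type} [Ring D] [Algebra k D]

/-- middle four interchange by `b`. -/
noncomputable def midL (b : D ⊗[k] D →ₗ[k] D ⊗[k] D) :
    (D ⊗[k] D) ⊗[k] (D ⊗[k] D) →ₗ[k] (D ⊗[k] D) ⊗[k] (D ⊗[k] D) :=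
  (TensorProduct.assoc k D D (D ⊗[k] D)).symm.toLinearMap ∘ₗ
  TensorProduct.map LinearMap.id (TensorProduct.assoc k D D D).toLinearMap ∘ₗ
  TensorProduct.map LinearMap.id (TensorProduct.map b LinearMap.id) ∘ₗ
  TensorProduct.map LinearMap.id (TensorProduct.assoc k D D D).symm.toLinearMap ∘ₗ
  (TensorProduct.assoc k D D (D ⊗[k] D)).toLinearMap

theorem midL_sum (act : H →ₗ[k] D →ₗ[k] D) (b : D ⊗[k] D →ₗ[k] D ⊗[k] D)
    {ι κ σ : Type} [Fintype ι] [Fintype κ] [Fintype σ]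
    (c1 c2 : ι → D) (c1' c2' : κ → D) (r1 r2 : σ → H)
    (hb : ∀ x y, b (x ⊗ₜ y) = ∑ r, act (r2 r) y ⊗ₜ act (r1 r) x) :
    TensorProduct.map (LinearMap.mul' k D) (LinearMap.mul' k D)
      (midL b ((∑ i, c1 i ⊗ₜ[k] c2 i) ⊗ₜ (∑ i, c1' i ⊗ₜ[k] c2' i))) =
    ∑ i, ∑ j, ∑ r, (c1 i * act (r2 r) (c1' j)) ⊗ₜ[k] (act (r1 r) (c2 i) * c2' j) := by
  simp only [midL, TensorProduct.sum_tmul, TensorProduct.tmul_sum, map_sum, LinearMap.comp_apply,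
    LinearEquiv.coe_coe, TensorProduct.assoc_tmul, TensorProduct.map_tmul, LinearMap.id_apply,
    TensorProduct.assoc_symm_tmul, hb, LinearMap.mul'_apply]
  exact Finset.sum_comm

variable {R Rinv : H ⊗[k] H}
    {act : H →ₗ[k] D →ₗ[k] D} {cm : D →ₗ[k] D ⊗[k] D} {cu : D →ₗ[k] k}
    {S Sinv : D →ₗ[k] D}

/-- `D` as a module -/
noncomputable def objD (h : IsModAlgL k H D act) : HM k H where
  carrier := D
  ρ := AlgHom.ofLinearMap act (LinearMap.ext h.one_act)
    (fun x y => LinearMap.ext fun c => (h.act_act x y c).symm)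

/-- act2 for D -/
noncomputable abbrev actDD (h : IsModAlgL k H D act) : H ⊗[k] H →ₗ[k] Module.End k (D ⊗[k] D) :=
  (HM.act2 (objD h) (objD h)).toLinearMap

theorem actDD_tmul (h : IsModAlgL k H D act) (a b : H) (x y : D) :
    actDD h (a ⊗ₜ b) (x ⊗ₜ y) = act a x ⊗ₜ act b y := rfl

theorem braidLinv_eq (h : IsModAlgL k H D act) (t : H ⊗[k] H) :
    braidLinv k H D t act = actDD h t ∘ₗ (TensorProduct.comm k D D).toLinearMap := by
  apply TensorProduct.ext'
  intro x y
  induction t with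
  | zero => simp [braidLinv]
  | add a b ha hb =>
    have : ∀ z, braidLinv k H D (a + b) act z = braidLinv k H D a act z + braidLinv k H D b act z := by
      intro z; simp [braidLinv]
    rw [this, ha, hb, map_add]; rfl
  | tmul a b => rfl

theorem mul_equiv (h : IsModAlgL k H D act) (g : H) (z : D ⊗[k] D) :
    LinearMap.mul' k D (actDD h (Coalgebra.comul (R := k) g) z) = act g (LinearMap.mul' k D z) := by
  obtain ⟨n, v, w, hvw⟩ := exRep k (Coalgebra.comul (R := k) g)
  induction z with
  | zero => simp
  | add a b ha hb => simp only [map_add, ha, hb]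
  | tmul x y =>
    rw [LinearMap.mul'_apply, h.act_mul g _ v w hvw, hvw, map_sum, LinearMap.sum_apply, map_sum]
    simp only [actDD_tmul, LinearMap.mul'_apply]

theorem cm_equiv (hD : IsBraidedGroupL k H R D act cm cu S) (g : H) (c : D) :
    cm (act g c) = actDD hD.modAlg (Coalgebra.comul (R := k) g) (cm c) := by
  obtain ⟨n, v, w, hvw⟩ := exRep k (Coalgebra.comul (R := k) g)
  obtain ⟨m, x, y, hxy⟩ := exRep k (cm c)
  rw [hD.cm_act c g _ x y _ v w hxy hvw, hvw, hxy]
  simp only [map_sum, LinearMap.sum_apply, actDD_tmul]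

theorem cm_mul_lin (hD : IsBraidedGroupL k H R D act cm cu S) (c c' : D) :
    cm (c * c') = TensorProduct.map (LinearMap.mul' k D) (LinearMap.mul' k D)
      (midL (D := D) (HM.brL R (objD hD.modAlg) (objD hD.modAlg)) (cm c ⊗ₜ cm c')) := by
  obtain ⟨n, v, w, hvw⟩ := exRep k (cm c)
  obtain ⟨m, x, y, hxy⟩ := exRep k (cm c')
  obtain ⟨l, r, s, hrs⟩ := exRep k R
  rw [hD.cm_mul c c' _ v w _ x y _ r s hvw hxy hrs, hvw, hxy]
  refine (midL_sum act _ v w x y r s ?_).symm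
  intro a b
  change TensorProduct.comm k D D (actDD hD.modAlg R (a ⊗ₜ b)) = _
  generalize hD.modAlg = hm
  rw [hrs, map_sum, LinearMap.sum_apply, map_sum]
  rfl

theorem antL_lin (hD : IsBraidedGroupL k H R D act cm cu S) (c : D) :
    LinearMap.mul' k D (TensorProduct.map S LinearMap.id (cm c)) = algebraMap k D (cu c) := by
  obtain ⟨n, v, w, hvw⟩ := exRep k (cm c)
  rw [Algebra.algebraMap_eq_smul_one, ← hD.antipode_left c _ v w hvw, hvw]
  simp

theorem antR_lin (hD : IsBraidedGroupL k H R D act cm cu S) (c : D) :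
    LinearMap.mul' k D (TensorProduct.map LinearMap.id S (cm c)) = algebraMap k D (cu c) := by
  obtain ⟨n, v, w, hvw⟩ := exRep k (cm c)
  rw [Algebra.algebraMap_eq_smul_one, ← hD.antipode_right c _ v w hvw, hvw]
  simp

/-- The Hopf object. -/
noncomputable abbrev hopfD (hQT : IsQT k H R Rinv) (hD : IsBraidedGroupL k H R D act cm cu S) :
    @HopfObj _ _ _ (HM.braided hQT) (objD hD.modAlg) :=
  letI := HM.braided hQT
  { one := ⟨Algebra.linearMap k D, fun h (x : k) => by
      change algebraMap k D (Coalgebra.counit (R := k) h * x) = act h (algebraMap k D x)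
      rw [Algebra.algebraMap_eq_smul_one x, map_smul, hD.modAlg.act_one, map_mul,
        Algebra.algebraMap_eq_smul_one, Algebra.algebraMap_eq_smul_one]
      simp [smul_smul, mul_comm]⟩
    mul := ⟨LinearMap.mul' k D, fun h x => mul_equiv hD.modAlg h x⟩
    one_mul := HM.hext (TensorProduct.ext' fun x y => (Algebra.smul_def (R := k) (A := D) x y).symm)
    mul_one := HM.hext (TensorProduct.ext' fun x y =>
      (Algebra.commutes (R := k) (A := D) y x).symm.trans (Algebra.smul_def (R := k) (A := D) y x).symm)
    mul_assoc := HM.hext (TensorProduct.ext_threefold fun x y z => mul_assoc (G := D) x y z)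
    counit := ⟨cu, fun h x => hD.cu_act h x⟩
    comul := ⟨cm, fun h x => cm_equiv hD h x⟩
    counit_comul := HM.hext (LinearMap.ext fun x => by
      apply (TensorProduct.lid k D).injective
      have := LinearMap.congr_fun hD.counit_left x
      refine Eq.trans (b := x) this ?_
      exact (one_smul k x).symm)
    comul_counit := HM.hext (LinearMap.ext fun x => by
      apply (TensorProduct.rid k D).injective
      have := LinearMap.congr_fun hD.counit_right x
      refine Eq.trans (b := x) this ?_
      exact (one_smul k x).symm)
    comul_assoc := HM.hext hD.coassoc.symm
    mul_comul := HM.hext (TensorProduct.ext' fun x y => cm_mul_lin hD x y)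
    one_comul := HM.hext (LinearMap.ext_ring (by
      change cm (algebraMap k D 1) = algebraMap k D 1 ⊗ₜ algebraMap k D 1
      rw [map_one, hD.cm_one]))
    mul_counit := HM.hext (TensorProduct.ext' fun x y => hD.cu_mul x y)
    one_counit := HM.hext (LinearMap.ext_ring (by
      change cu (algebraMap k D 1) = 1
      rw [map_one, hD.cu_one]))
    antipode := ⟨S, fun h x => hD.antipode_act h x⟩
    antipode_left := HM.hext (LinearMap.ext fun x => antL_lin hD x)
    antipode_right := HM.hext (LinearMap.ext fun x => antR_lin hD x) }

end HopfD

section Stmt0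

variable (D : Type) [Ring D] [Algebra k D]

/-- Lemma 3.1.  Let `H` be a quasitriangular Hopf algebra over a
field `k` and `D` a braided group in the braided category of left `H`-modules with
invertible braided antipode `S̲`.  Then `D^{cop̲}` — the same algebra, unit and
counit, with the opposite braided coproduct `Ψ⁻¹ ∘ Δ̲` and antipode `S̲⁻¹` — is a
braided group in the braided category of left modules over `H̄`, where `H̄` is `H`
with the quasitriangular structure `𝓡̄ = 𝓡₂₁⁻¹ = τ(𝓡⁻¹)`. -/
theorem double_bosonisation_stmt0
    (R Rinv : H ⊗[k] H)
    (act : H →ₗ[k] D →ₗ[k] D) (cm : D →ₗ[k] D ⊗[k] D) (cu : D →ₗ[k] k)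
    (S Sinv : D →ₗ[k] D)
    (hQT : IsQT k H R Rinv)
    (hD : IsBraidedGroupL k H R D act cm cu S)
    (hS1 : S ∘ₗ Sinv = LinearMap.id) (hS2 : Sinv ∘ₗ S = LinearMap.id) :
    IsBraidedGroupL k H ((TensorProduct.comm k H H) Rinv) D act
      (braidLinv k H D Rinv act ∘ₗ cm) cu Sinv := by
  letI := HM.braided hQT
  letI := hopfD hQT hD
  have hSact : ∀ h c, Sinv (act h c) = act h (Sinv c) := by
    intro h c
    have h1 : S (Sinv c) = c := LinearMap.congr_fun hS1 c
    have h2 : Sinv (S (act h (Sinv c))) = act h (Sinv c) := LinearMap.congr_fun hS2 _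
    rw [hD.antipode_act, h1] at h2
    exact h2
  have hbr := braidLinv_eq hD.modAlg Rinv
  let T : Quiver.Hom (objD hD.modAlg) (objD hD.modAlg) :=
    (⟨Sinv, hSact⟩ : HM.Hom' (objD hD.modAlg) (objD hD.modAlg))
  have hT1 : CategoryTheory.CategoryStruct.comp (CategoryTheory.HopfObj.antipode (X := objD hD.modAlg)) T
    = CategoryTheory.CategoryStruct.id _ := HM.hext hS2
  have hT2 : CategoryTheory.CategoryStruct.comp T (CategoryTheory.HopfObj.antipode (X := objD hD.modAlg))
    = CategoryTheory.CategoryStruct.id _ := HM.hext hS1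
  have hca := congrArg HM.Hom'.lin (cop_coassoc (objD hD.modAlg))
  have hcl := congrArg HM.Hom'.lin (cop_counit_left (objD hD.modAlg))
  have hcr := congrArg HM.Hom'.lin (cop_counit_right (objD hD.modAlg))
  have hcm := congrArg HM.Hom'.lin (cop_mul (objD hD.modAlg))
  have hal := congrArg HM.Hom'.lin (cop_antipode_left (objD hD.modAlg) T hT1 hT2)
  have har := congrArg HM.Hom'.lin (cop_antipode_right (objD hD.modAlg) T hT1 hT2)
  have hco := (CategoryTheory.CategoryStruct.comp (CategoryTheory.ComonObj.comul (X := objD hD.modAlg))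
    (CategoryTheory.BraidedCategory.braiding (objD hD.modAlg) (objD hD.modAlg)).inv).comm
  have hone : (braidLinv k H D Rinv act ∘ₗ cm) 1 = 1 ⊗ₜ[k] 1 := by
    have hu := LinearMap.congr_fun (congrArg HM.Hom'.lin (cop_one (objD hD.modAlg))) (1 : k)
    have hu' : (actDD hD.modAlg Rinv ∘ₗ (TensorProduct.comm k D D).toLinearMap ∘ₗ cm)
      (algebraMap k D 1) = algebraMap k D 1 ⊗ₜ[k] algebraMap k D 1 := hu
    rw [map_one] at hu'
    rw [hbr]
    exact hu'
  rw [hbr]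
  rw [hbr] at hone
  exact
  { modAlg := hD.modAlg
    coassoc := hca
    counit_left := hcl
    counit_right := hcr
    cu_one := hD.cu_one
    cu_mul := hD.cu_mul
    cu_act := hD.cu_act
    cm_one := hone
    cm_act := by
      intro c h ι _ c1 c2 κ _ h1 h2 hc hh
      refine (hco h c).trans ?_
      refine Eq.trans (b := actDD hD.modAlg (Coalgebra.comul (R := k) h) (∑ i, c1 i ⊗ₜ[k] c2 i))
        (congrArg (actDD hD.modAlg (Coalgebra.comul (R := k) h)) hc) ?_
      rw [hh]
      simp only [map_sum, LinearMap.sum_apply, actDD_tmul]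
    cm_mul := by
      intro c c' ι _ c1 c2 κ _ c1' c2' σ _ r1 r2 hc hc' hr
      have hr' : Rinv = ∑ r, r2 r ⊗ₜ[k] r1 r := by
        apply (TensorProduct.comm k H H).injective
        rw [hr]; simp
      refine (LinearMap.congr_fun hcm (c ⊗ₜ[k] c' : D ⊗[k] D)).trans ?_
      refine Eq.trans ?_ (midL_sum act (actDD hD.modAlg Rinv ∘ₗ (TensorProduct.comm k D D).toLinearMap)
        c1 c2 c1' c2' r1 r2 ?_)
      · rw [← hc, ← hc']; rfl
      · intro x y
        rw [LinearMap.comp_apply, hr', map_sum, LinearMap.sum_apply]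
        rfl
    antipode_left := by
      intro c ι _ c1 c2 hc
      have h := LinearMap.congr_fun hal c
      have h' : LinearMap.mul' k D (TensorProduct.map Sinv LinearMap.id
        ((actDD hD.modAlg Rinv ∘ₗ (TensorProduct.comm k D D).toLinearMap ∘ₗ cm) c)) =
          algebraMap k D (cu c) := h
      rw [← LinearMap.comp_assoc, hc, Algebra.algebraMap_eq_smul_one] at h'
      rw [← h']
      simp
    antipode_right := by
      intro c ι _ c1 c2 hc
      have h := LinearMap.congr_fun har c
      have h' : LinearMap.mul' k D (TensorProduct.map LinearMap.id Sinv
        ((actDD hD.modAlg Rinv ∘ₗ (TensorProduct.comm k D D).toLinearMap ∘ₗ cm) c)) =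
          algebraMap k D (cu c) := h
      rw [← LinearMap.comp_assoc, hc, Algebra.algebraMap_eq_smul_one] at h'
      rw [← h']
      simp
    antipode_act := hSact }

end Stmt0

end DBos
end

section
/- Given a Cartan datum (I,·) and a root datum (Y,X,⟨ , ⟩) over it, the formula ⟨K_μ, g_i⟩ = q^{⟨μ,i′⟩} extends to a well-defined duality pairing ⟨ , ⟩:H⊗A→k, and the algebra homomorphisms 𝓑,𝓑̄:A→H determined by 𝓑(g_i) = K_i^{(i·i)/2} and 𝓑̄(g_i) = K_i^{−(i·i)/2} constitute a weak quasitriangular structure making (H,A) = (kY, kZ[I]) a weakly quasitriangular dual pair; in particular 𝓑̄ = 𝓑⁻¹ and ⟨𝓑̄(a),b⟩ = ⟨𝓑⁻¹(b),a⟩ for all a,b∈A. -/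
open TensorProduct LinearMap

namespace DBosLus

variable (k : Type) [Field k]

/-- The four-fold transposition `(V⊗W)⊗(X⊗Y) → (V⊗X)⊗(W⊗Y)`. -/
noncomputable def tttc (V W X Y : Type) [AddCommGroup V] [Module k V] [AddCommGroup W]
    [Module k W] [AddCommGroup X] [Module k X] [AddCommGroup Y] [Module k Y] :
    (V ⊗[k] W) ⊗[k] (X ⊗[k] Y) →ₗ[k] (V ⊗[k] X) ⊗[k] (W ⊗[k] Y) :=
  (TensorProduct.tensorTensorTensorComm k V W X Y).toLinearMap


section helpers

variable {k}

lemma ext_span {V M N : Type} [AddCommGroup V] [Module k V] [AddCommGroup M] [Module k M]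
    (e : N → V) (hs : Submodule.span k (Set.range e) = ⊤) (F G : V →ₗ[k] M)
    (h : ∀ n, F (e n) = G (e n)) (v : V) : F v = G v := by
  have : F = G := LinearMap.ext_on_range hs h
  rw [this]

lemma ext_span₂ {V W M N N' : Type} [AddCommGroup V] [Module k V] [AddCommGroup W] [Module k W]
    [AddCommGroup M] [Module k M]
    (e : N → V) (hs : Submodule.span k (Set.range e) = ⊤)
    (e' : N' → W) (hs' : Submodule.span k (Set.range e') = ⊤) (F G : V →ₗ[k] W →ₗ[k] M)
    (h : ∀ n n', F (e n) (e' n') = G (e n) (e' n')) (v : V) (w : W) : F v w = G v w := by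
  rw [ext_span e hs F G (fun n => LinearMap.ext (ext_span e' hs' _ _ (h n))) v]

lemma sweedler {V M N : Type} [Ring V] [HopfAlgebra k V] [AddCommGroup M] [Module k M]
    (e : N → V) (hs : Submodule.span k (Set.range e) = ⊤)
    (hcm : ∀ n, Coalgebra.comul (R := k) (e n) = e n ⊗ₜ[k] e n)
    (G : V →ₗ[k] M) (F : V →ₗ[k] V →ₗ[k] M) (h : ∀ n, G (e n) = F (e n) (e n))
    (a : V) (ι : Type) [Fintype ι] (a1 a2 : ι → V)
    (ha : Coalgebra.comul (R := k) a = ∑ i, a1 i ⊗ₜ[k] a2 i) :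
    G a = ∑ i, F (a1 i) (a2 i) := by
  have := ext_span e hs G (TensorProduct.lift F ∘ₗ Coalgebra.comul)
    (fun n => by simp [hcm, h]) a
  rw [this, LinearMap.comp_apply, ha]
  simp

lemma sweedler₃ {V M N : Type} [Ring V] [HopfAlgebra k V] [AddCommGroup M] [Module k M]
    (e : N → V) (hs : Submodule.span k (Set.range e) = ⊤)
    (hcm : ∀ n, Coalgebra.comul (R := k) (e n) = e n ⊗ₜ[k] e n)
    (G : V →ₗ[k] M) (F : (V ⊗[k] V) ⊗[k] V →ₗ[k] M)
    (h : ∀ n, G (e n) = F ((e n ⊗ₜ[k] e n) ⊗ₜ[k] e n))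
    (a : V) (ι : Type) [Fintype ι] (a1 a2 a3 : ι → V)
    (ha : (LinearMap.rTensor V (Coalgebra.comul (R := k)) ∘ₗ Coalgebra.comul (R := k)) a
          = ∑ m, (a1 m ⊗ₜ[k] a2 m) ⊗ₜ[k] a3 m) :
    G a = ∑ i, F ((a1 i ⊗ₜ[k] a2 i) ⊗ₜ[k] a3 i) := by
  have := ext_span e hs G (F ∘ₗ LinearMap.rTensor V (Coalgebra.comul (R := k)) ∘ₗ
    Coalgebra.comul (R := k)) (fun n => by simp [hcm, h]) a
  rw [this, LinearMap.comp_apply, ha]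
  simp

/-- The intertwining relation between left and right derivatives. -/
lemma intertwine {H A N N' : Type} [Ring H] [HopfAlgebra k H] [Ring A] [HopfAlgebra k A]
    (K : N → H) (hKspan : Submodule.span k (Set.range K) = ⊤)
    (hKcm : ∀ n, Coalgebra.comul (R := k) (K n) = K n ⊗ₜ[k] K n)
    (g : N' → A) (hgspan : Submodule.span k (Set.range g) = ⊤)
    (hgcm : ∀ n, Coalgebra.comul (R := k) (g n) = g n ⊗ₜ[k] g n)
    (P : H →ₗ[k] A →ₗ[k] k) (r s : A →ₗ[k] H)
    (hrs : ∀ n m, r (g m) * K n * s (g m) = K n)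
    (h : H) (a : A) (ι : Type) [Fintype ι] (h1 h2 : ι → H)
    (μ : Type) [Fintype μ] (a1 a2 a3 : μ → A)
    (hh : Coalgebra.comul (R := k) h = ∑ j, h1 j ⊗ₜ[k] h2 j)
    (ha : (LinearMap.rTensor A (Coalgebra.comul (R := k)) ∘ₗ Coalgebra.comul (R := k)) a
          = ∑ m, (a1 m ⊗ₜ[k] a2 m) ⊗ₜ[k] a3 m) :
    ∑ j, P (h2 j) a • h1 j = ∑ m, ∑ j, P (h1 j) (a2 m) • (r (a1 m) * h2 j * s (a3 m)) := by
  let B : ι → A →ₗ[k] A →ₗ[k] H := fun j => LinearMap.mk₂ k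
    (fun x y => P (h1 j) y • (r x * h2 j))
    (by intros; simp [add_mul]) (by intros; simp only [map_smul, smul_mul_assoc, mul_smul_comm]; exact smul_comm _ _ _) (by intros; simp [add_smul])
    (by intros; simp [mul_smul])
  let Φ : (A ⊗[k] A) ⊗[k] A →ₗ[k] H :=
    ∑ j, TensorProduct.lift (((LinearMap.mul k H).compl₂ s) ∘ₗ TensorProduct.lift (B j))
  have hΦ : ∀ x y z, Φ ((x ⊗ₜ[k] y) ⊗ₜ[k] z) = ∑ j, P (h1 j) y • (r x * h2 j * s z) := by
    intro x y z
    simp [Φ, B, LinearMap.sum_apply]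
  let G : A →ₗ[k] H := ∑ j, (P (h2 j)).smulRight (h1 j)
  have hG : ∀ x, G x = ∑ j, P (h2 j) x • h1 j := by
    intro x; simp [G, LinearMap.sum_apply]
  rw [← hG]
  simp_rw [← hΦ]
  refine sweedler₃ g hgspan hgcm G Φ (fun n => ?_) a μ a1 a2 a3 ha
  rw [hG, hΦ]
  -- both sides are the image of the comultiplication of `h`
  let F1 : H →ₗ[k] H →ₗ[k] H := LinearMap.mk₂ k (fun x y => P y (g n) • x)
    (by intros; simp) (by intros; exact smul_comm _ _ _) (by intros; simp [add_smul])
    (by intros; simp [mul_smul])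
  let F2 : H →ₗ[k] H →ₗ[k] H := LinearMap.mk₂ k
    (fun x y => P x (g n) • (r (g n) * y * s (g n)))
    (by intros; simp [add_smul]) (by intros; simp [mul_smul])
    (by intros; simp [mul_add, add_mul]) (by intros; simp only [map_smul, smul_mul_assoc, mul_smul_comm]; exact smul_comm _ _ _)
  have e1 := sweedler K hKspan hKcm (TensorProduct.lift F1 ∘ₗ Coalgebra.comul) F1
    (fun m => by simp [hKcm]) h ι h1 h2 hh
  have e2 := sweedler K hKspan hKcm (TensorProduct.lift F1 ∘ₗ Coalgebra.comul) F2
    (fun m => by simp [hKcm, F1, F2, hrs]) h ι h1 h2 hh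
  exact e1.symm.trans e2

end helpers

/-- Lemma 4.1.  Given a Cartan datum `(I,·)` and a root datum
`(Y,X,⟨ , ⟩)` over it, the formula `⟨K_μ, g_i⟩ = q^{⟨μ,i′⟩}` extends to a
well-defined duality pairing `⟨ , ⟩ : H ⊗ A → k` between `H = kY` and
`A = kℤ[I]`, and the algebra homomorphisms `𝓑, 𝓑̄ : A → H` determined by
`𝓑(g_i) = K_i^{(i·i)/2}` and `𝓑̄(g_i) = K_i^{-(i·i)/2}` constitute a weak
quasitriangular structure making `(H,A)` a weakly quasitriangular dual pair;
in particular `𝓑̄ = 𝓑⁻¹` and `⟨𝓑̄(a),b⟩ = ⟨𝓑⁻¹(b),a⟩` for all `a, b ∈ A`. -/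
theorem lusztig_weak_qt_stmt8

    (I : Type) [Fintype I] [DecidableEq I]
    -- the Cartan datum: a symmetric bilinear form `·` on `ℤ[I]`
    (dot : (I →₀ ℤ) →ₗ[ℤ] (I →₀ ℤ) →ₗ[ℤ] ℤ)
    (hsymm : ∀ x y, dot x y = dot y x)
    -- `i·i ∈ {2,4,6,…}`, written `i·i = 2·d i` with `d i > 0`
    (dd : I → ℕ) (hdd : ∀ i, 0 < dd i)
    (hdiag : ∀ i, dot (Finsupp.single i 1) (Finsupp.single i 1) = 2 * (dd i : ℤ))
    -- `a_{ij} = 2(i·j)/(i·i) ∈ {0,-1,-2,…}` for `i ≠ j`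
    (hoff : ∀ i j, i ≠ j → ∃ a : ℕ,
      2 * dot (Finsupp.single i 1) (Finsupp.single j 1)
        = -(a : ℤ) * dot (Finsupp.single i 1) (Finsupp.single i 1))
    -- the root datum: finitely generated free abelian groups `Y`, `X`,
    -- a perfect pairing, and embeddings `I ⊆ Y`, `I ⊆ X` with `⟨i,j′⟩ = a_{ij}`
    (Y X : Type) [AddCommGroup Y] [AddCommGroup X]
    [Module.Free ℤ Y] [Module.Finite ℤ Y] [Module.Free ℤ X] [Module.Finite ℤ X]
    (pYX : Y →ₗ[ℤ] X →ₗ[ℤ] ℤ)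
    (hperf : Function.Bijective pYX ∧ Function.Bijective pYX.flip)
    (iY : I → Y) (iX : I → X)
    (hiY : Function.Injective iY) (hiX : Function.Injective iX)
    (hroot : ∀ i j, pYX (iY i) (iX j) * dot (Finsupp.single i 1) (Finsupp.single i 1)
      = 2 * dot (Finsupp.single i 1) (Finsupp.single j 1))
    -- the parameter `q`
    (q : k) (hq : q ≠ 0)
    -- `H = kY`: a Hopf algebra with a grouplike basis `{K_μ : μ ∈ Y}`
    (H : Type) [Ring H] [HopfAlgebra k H] (K : Y → H)
    (hK0 : K 0 = 1) (hKadd : ∀ μ ν, K (μ + ν) = K μ * K ν)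
    (hKcm : ∀ μ, Coalgebra.comul (R := k) (K μ) = K μ ⊗ₜ[k] K μ)
    (hKcu : ∀ μ, Coalgebra.counit (R := k) (K μ) = 1)
    (hKS : ∀ μ, HopfAlgebra.antipode (R := k) (K μ) = K (-μ))
    (hKli : LinearIndependent k K)
    (hKspan : Submodule.span k (Set.range K) = ⊤)
    -- `A = kℤ[I]`: a Hopf algebra with a grouplike basis `{g_ν : ν ∈ ℤ[I]}`
    (A : Type) [Ring A] [HopfAlgebra k A] (g : (I →₀ ℤ) → A)
    (hg0 : g 0 = 1) (hgadd : ∀ μ ν, g (μ + ν) = g μ * g ν)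
    (hgcm : ∀ ν, Coalgebra.comul (R := k) (g ν) = g ν ⊗ₜ[k] g ν)
    (hgcu : ∀ ν, Coalgebra.counit (R := k) (g ν) = 1)
    (hgS : ∀ ν, HopfAlgebra.antipode (R := k) (g ν) = g (-ν))
    (hgli : LinearIndependent k g)
    (hgspan : Submodule.span k (Set.range g) = ⊤) :
    ∃ (P : H →ₗ[k] A →ₗ[k] k) (ρ ρbar : A →ₐ[k] H) (ρi ρbari : A →ₗ[k] H),
      -- the pairing extends `⟨K_μ, g_i⟩ = q^{⟨μ,i′⟩}`
      (∀ (μ : Y) (ν : I →₀ ℤ),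
        P (K μ) (g ν) = q ^ (pYX μ ((Finsupp.linearCombination ℤ iX) ν))) ∧
      -- `𝓑(g_i) = K_i^{(i·i)/2}`, `𝓑̄(g_i) = K_i^{-(i·i)/2}`
      (∀ i : I, ρ (g (Finsupp.single i 1)) = K ((dd i : ℤ) • iY i)) ∧
      (∀ i : I, ρbar (g (Finsupp.single i 1)) = K (-((dd i : ℤ) • iY i))) ∧
      -- `P` is a duality pairing of Hopf algebras
      (∀ (h h' : H) (a : A) (ι : Type) [Fintype ι] (a1 a2 : ι → A),
        Coalgebra.comul (R := k) a = ∑ i, a1 i ⊗ₜ[k] a2 i →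
        P (h * h') a = ∑ i, P h (a1 i) * P h' (a2 i)) ∧
      (∀ (h : H) (a a' : A) (ι : Type) [Fintype ι] (h1 h2 : ι → H),
        Coalgebra.comul (R := k) h = ∑ j, h1 j ⊗ₜ[k] h2 j →
        P h (a * a') = ∑ j, P (h1 j) a * P (h2 j) a') ∧
      (∀ a, P 1 a = Coalgebra.counit (R := k) a) ∧
      (∀ h, P h 1 = Coalgebra.counit (R := k) h) ∧
      (∀ h a, P (HopfAlgebra.antipode (R := k) h) a
        = P h (HopfAlgebra.antipode (R := k) a)) ∧
      -- `𝓑`, `𝓑̄` are anti-coalgebra maps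
      (∀ (a : A) (ι : Type) [Fintype ι] (a1 a2 : ι → A),
        Coalgebra.comul (R := k) a = ∑ i, a1 i ⊗ₜ[k] a2 i →
        Coalgebra.comul (R := k) (ρ a) = ∑ i, ρ (a2 i) ⊗ₜ[k] ρ (a1 i)
          ∧ Coalgebra.comul (R := k) (ρbar a) = ∑ i, ρbar (a2 i) ⊗ₜ[k] ρbar (a1 i)) ∧
      (∀ a, Coalgebra.counit (R := k) (ρ a) = Coalgebra.counit (R := k) a) ∧
      (∀ a, Coalgebra.counit (R := k) (ρbar a) = Coalgebra.counit (R := k) a) ∧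
      -- `𝓑`, `𝓑̄` are convolution-invertible, with inverses `ρi`, `ρbari`
      (∀ (a : A) (ι : Type) [Fintype ι] (a1 a2 : ι → A),
        Coalgebra.comul (R := k) a = ∑ i, a1 i ⊗ₜ[k] a2 i →
        (∑ i, ρ (a1 i) * ρi (a2 i) = Coalgebra.counit (R := k) a • (1 : H))
        ∧ (∑ i, ρi (a1 i) * ρ (a2 i) = Coalgebra.counit (R := k) a • (1 : H))
        ∧ (∑ i, ρbar (a1 i) * ρbari (a2 i) = Coalgebra.counit (R := k) a • (1 : H))
        ∧ (∑ i, ρbari (a1 i) * ρbar (a2 i) = Coalgebra.counit (R := k) a • (1 : H))) ∧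
      -- `𝓑̄ = 𝓑⁻¹` (as a consequence of the symmetry of `·`)
      (ρbar.toLinearMap = ρi) ∧
      -- `⟨𝓑̄(a), b⟩ = ⟨𝓑⁻¹(b), a⟩`
      (∀ a b : A, P (ρbar a) b = P (ρi b) a) ∧
      -- `∂ᴿ h = 𝓑 * (∂ᴸ h) * 𝓑⁻¹` and `∂ᴿ h = 𝓑̄ * (∂ᴸ h) * 𝓑̄⁻¹`
      (∀ (h : H) (a : A) (ι : Type) [Fintype ι] (h1 h2 : ι → H)
        (μ : Type) [Fintype μ] (a1 a2 a3 : μ → A),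
        Coalgebra.comul (R := k) h = ∑ j, h1 j ⊗ₜ[k] h2 j →
        (LinearMap.rTensor A (Coalgebra.comul (R := k)) ∘ₗ Coalgebra.comul (R := k)) a
          = ∑ m, (a1 m ⊗ₜ[k] a2 m) ⊗ₜ[k] a3 m →
        (∑ j, P (h2 j) a • h1 j
            = ∑ m, ∑ j, P (h1 j) (a2 m) • (ρ (a1 m) * h2 j * ρi (a3 m)))
        ∧ (∑ j, P (h2 j) a • h1 j
            = ∑ m, ∑ j, P (h1 j) (a2 m) • (ρbar (a1 m) * h2 j * ρbari (a3 m)))) := by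
  have hgtop := hgspan
  let bK := Module.Basis.mk hKli hKspan.ge
  let bA := Module.Basis.mk hgli hgspan.ge
  have bK_app : ∀ μ, bK μ = K μ := fun μ => Module.Basis.mk_apply _ _ _
  have bA_app : ∀ μ, bA μ = g μ := fun μ => Module.Basis.mk_apply _ _ _
  let E : Y → (I →₀ ℤ) → ℤ := fun μ ν => pYX μ ((Finsupp.linearCombination ℤ iX) ν)
  let P : H →ₗ[k] A →ₗ[k] k := bK.constr k (fun μ => bA.constr k (fun ν => q ^ E μ ν))
  have hP : ∀ μ ν, P (K μ) (g ν) = q ^ E μ ν := by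
    intro μ ν
    rw [← bK_app, ← bA_app]
    simp only [P, Module.Basis.constr_basis]
  let φ : (I →₀ ℤ) →ₗ[ℤ] Y := Finsupp.linearCombination ℤ (fun i => (dd i : ℤ) • iY i)
  have mk : ∀ ψ : (I →₀ ℤ) →ₗ[ℤ] Y, ∃ r : A →ₐ[k] H, ∀ ν, r (g ν) = K (ψ ν) := by
    intro ψ
    let r : A →ₗ[k] H := bA.constr k (fun ν => K (ψ ν))
    have hr : ∀ ν, r (g ν) = K (ψ ν) := by
      intro ν; rw [← bA_app]; simp only [r, Module.Basis.constr_basis]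
    refine ⟨AlgHom.ofLinearMap r (by rw [← hg0, hr, map_zero, hK0]) ?_, hr⟩
    intro x y
    exact ext_span₂ g hgspan g hgspan ((LinearMap.mul k A).compr₂ r)
      ((LinearMap.mul k H).compl₁₂ r r)
      (fun n m => by simp [hr, ← hgadd, ← hKadd]) x y
  obtain ⟨ρ, hρ⟩ := mk φ
  obtain ⟨σ, hσ⟩ := mk (-φ)
  have hσ' : ∀ ν, σ (g ν) = K (-φ ν) := fun ν => hσ ν
  have hE : ∀ ν ν', E (φ ν) ν' = dot ν ν' := by
    have h0 : (pYX ∘ₗ φ).compl₂ (Finsupp.linearCombination ℤ iX) = dot := by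
      ext i j
      have h1 := hroot i j
      rw [hdiag] at h1
      simp [φ]
      linarith
    intro ν ν'
    rw [← h0]; rfl
  have hEneg : ∀ μ ν, E (-μ) ν = - E μ ν := by intro μ ν; simp [E]
  have hEneg' : ∀ μ ν, E μ (-ν) = - E μ ν := by intro μ ν; simp [E]
  have hEadd : ∀ μ μ' ν, E (μ + μ') ν = E μ ν + E μ' ν := by intro μ μ' ν; simp [E]
  have hEadd' : ∀ μ ν ν', E μ (ν + ν') = E μ ν + E μ ν' := by intro μ μ' ν; simp [E]
  have hanti : ∀ (ψ : (I →₀ ℤ) →ₗ[ℤ] Y) (r : A →ₐ[k] H), (∀ ν, r (g ν) = K (ψ ν)) →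
      ∀ (a : A) (ι : Type) [Fintype ι] (a1 a2 : ι → A),
        Coalgebra.comul (R := k) a = ∑ i, a1 i ⊗ₜ[k] a2 i →
        Coalgebra.comul (R := k) (r a) = ∑ i, r (a2 i) ⊗ₜ[k] r (a1 i) := by
    intro ψ r hr a ι _ a1 a2 ha
    exact sweedler g hgspan hgcm (Coalgebra.comul ∘ₗ r.toLinearMap)
      ((TensorProduct.mk k H H).compl₁₂ r.toLinearMap r.toLinearMap).flip
      (fun n => by simp [hr, hKcm]) a ι a1 a2 ha
  have hcou : ∀ (ψ : (I →₀ ℤ) →ₗ[ℤ] Y) (r : A →ₐ[k] H), (∀ ν, r (g ν) = K (ψ ν)) →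
      ∀ a, Coalgebra.counit (R := k) (r a) = Coalgebra.counit (R := k) a := by
    intro ψ r hr a
    exact ext_span g hgspan (Coalgebra.counit ∘ₗ r.toLinearMap) Coalgebra.counit
      (fun n => by simp [hr, hKcu, hgcu]) a
  have hconv : ∀ (r s : A →ₐ[k] H), (∀ ν, r (g ν) * s (g ν) = 1) →
      ∀ (a : A) (ι : Type) [Fintype ι] (a1 a2 : ι → A),
        Coalgebra.comul (R := k) a = ∑ i, a1 i ⊗ₜ[k] a2 i →
        ∑ i, r (a1 i) * s (a2 i) = Coalgebra.counit (R := k) a • (1 : H) := by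
    intro r s hrs a ι _ a1 a2 ha
    exact (sweedler g hgspan hgcm ((Coalgebra.counit (R := k) (A := A)).smulRight (1 : H))
      ((LinearMap.mul k H).compl₁₂ r.toLinearMap s.toLinearMap)
      (fun n => by simp [hrs, hgcu]) a ι a1 a2 ha).symm
  have hrs : ∀ ν, ρ (g ν) * σ (g ν) = 1 := by
    intro ν; rw [hρ, hσ', ← hKadd, add_neg_cancel, hK0]
  have hsr : ∀ ν, σ (g ν) * ρ (g ν) = 1 := by
    intro ν; rw [hρ, hσ', ← hKadd, neg_add_cancel, hK0]
  refine ⟨P, ρ, σ, σ.toLinearMap, ρ.toLinearMap, hP, ?_, ?_, ?_, ?_, ?_, ?_, ?_, ?_,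
    hcou φ ρ hρ, hcou (-φ) σ hσ, ?_, rfl, ?_, ?_⟩
  · intro i; rw [hρ]; simp [φ]
  · intro i; rw [hσ']; simp [φ]
  · intro h h' a ι _ a1 a2 ha
    refine sweedler g hgspan hgcm (P (h * h'))
      ((LinearMap.mul k k).compl₁₂ (P h) (P h')) (fun n => ?_) a ι a1 a2 ha
    exact ext_span₂ K hKspan K hKspan ((LinearMap.mul k H).compr₂ (P.flip (g n)))
      ((LinearMap.mul k k).compl₁₂ (P.flip (g n)) (P.flip (g n)))
      (fun m m' => by simp [← hKadd, hP, hEadd, zpow_add₀ hq]) h h'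
  · intro h a a' ι _ h1 h2 hh
    refine sweedler K hKspan hKcm (P.flip (a * a'))
      ((LinearMap.mul k k).compl₁₂ (P.flip a) (P.flip a')) (fun n => ?_) h ι h1 h2 hh
    exact ext_span₂ g hgspan g hgspan ((LinearMap.mul k A).compr₂ (P (K n)))
      ((LinearMap.mul k k).compl₁₂ (P (K n)) (P (K n)))
      (fun m m' => by simp [← hgadd, hP, hEadd', zpow_add₀ hq]) a a'
  · exact ext_span g hgspan (P 1) Coalgebra.counit
      (fun n => by rw [← hK0, hP, hgcu]; simp [E])
  · exact ext_span K hKspan (P.flip 1) Coalgebra.counit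
      (fun n => by rw [LinearMap.flip_apply, ← hg0, hP, hKcu]; simp [E])
  · exact ext_span₂ K hKspan g hgspan (P ∘ₗ HopfAlgebra.antipode k)
      (P.compl₂ (HopfAlgebra.antipode k))
      (fun n m => by simp [hKS, hgS, hP, hEneg, hEneg'])
  · intro a ι _ a1 a2 ha
    exact ⟨hanti φ ρ hρ a ι a1 a2 ha, hanti (-φ) σ hσ a ι a1 a2 ha⟩
  · intro a ι _ a1 a2 ha
    exact ⟨hconv ρ σ hrs a ι a1 a2 ha, hconv σ ρ hsr a ι a1 a2 ha,
      hconv σ ρ hsr a ι a1 a2 ha, hconv ρ σ hrs a ι a1 a2 ha⟩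
  · exact ext_span₂ g hgspan g hgspan (P ∘ₗ σ.toLinearMap) (P ∘ₗ σ.toLinearMap).flip
      (fun n m => by simp [hσ', hP, hEneg, hE, hsymm n m])
  · intro h a ι _ h1 h2 μ _ a1 a2 a3 hh ha
    refine ⟨intertwine K hKspan hKcm g hgspan hgcm P ρ.toLinearMap σ.toLinearMap
      (fun n m => ?_) h a ι h1 h2 μ a1 a2 a3 hh ha,
      intertwine K hKspan hKcm g hgspan hgcm P σ.toLinearMap ρ.toLinearMap
      (fun n m => ?_) h a ι h1 h2 μ a1 a2 a3 hh ha⟩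
    · simp only [AlgHom.toLinearMap_apply, hρ, hσ', ← hKadd]
      congr 1; abel
    · simp only [AlgHom.toLinearMap_apply, hρ, hσ', ← hKadd]
      congr 1; abel


end DBosLus
end
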